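/- Let k = 3, so N = 9. There exist a constant c > 0 and R₀ ≥ 2 such that for every R ≥ R₀, ∫_{B_R} |E_31(x)|^{12} dx ≥ c · log R, where B_R ⊂ ℝ⁹ is the closed ball of radius R centered at the origin. -/

import Mathlib

open MeasureTheory Real Set
open scoped ENNReal

noncomputable section

/-- Index set for multi-indices `β = (β₁, β₂) ∈ ℕ²` with `1 ≤ β₁ + β₂ ≤ k`;
its cardinality is `N = (k+1)(k+2)/2 − 1`. -/
def Idx (k : ℕ) : Type :=
  {β : Fin (k + 1) × Fin (k + 1) // 1 ≤ (β.1 : ℕ) + (β.2 : ℕ) ∧ (β.1 : ℕ) + (β.2 : ℕ) ≤ k}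

instance (k : ℕ) : Fintype (Idx k) := by unfold Idx; infer_instance

/-- The phase polynomial `P(ξ; x) = ∑_{1 ≤ |β| ≤ k} x_β ξ₁^{β₁} ξ₂^{β₂}`. -/
def Pphase (k : ℕ) (x : Idx k → ℝ) (ξ : Fin 2 → ℝ) : ℝ :=
  ∑ β : Idx k, x β * ξ 0 ^ (β.1.1 : ℕ) * ξ 1 ^ (β.1.2 : ℕ)

/-- `E_k1(x) = ∫_{[0,1]²} e(P(ξ; x)) dξ` with `e(t) = exp(2πit)`. -/
def Eone (k : ℕ) (x : Idx k → ℝ) : ℂ :=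
  ∫ ξ in Icc (0 : Fin 2 → ℝ) 1, Complex.exp (2 * Real.pi * Complex.I * (Pphase k x ξ))

/-!
Take a cubic phase close to `a (ξ₁ - m(ξ₂))³` with `m` affine and `a = t³` large. It is nearly
constant for `|ξ₁ - m(ξ₂)| ≲ 1 / t` and oscillates elsewhere, so a one-sided van der Corput estimate
gives `|E₃₁| ≳ 1 / t`. This survives a perturbation `d(ξ₂) (ξ₁ - m(ξ₂)) + e(ξ₂)` with `d = O(t)` and
`e = O(1)`. In the coordinates `(a, m, d, e)` Lebesgue measure is `9 a² da dm dd de`, and at fixed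
`a` the admissible `(m, d, e)` have measure about `t³ = a`. Hence the slice at `a` contributes about
`a² · a · t⁻¹² da = da / a` to the integral of `|E₃₁|¹²`. All these points have norm `O(a)`, so the
ball of radius `R` contains the slices with `1 ≲ a ≲ R`, which add up to a multiple of `log R`.
-/

/-! ### Oscillatory integrals near a strip -/

lemma neg_two_div_le_integral_cos {φ ψ ψ' : ℝ → ℝ} {a b : ℝ} (hab : a ≤ b)
    (hφ : ∀ t ∈ Icc a b, HasDerivAt φ (ψ t) t) (hψ : ∀ t ∈ Icc a b, HasDerivAt ψ (ψ' t) t)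
    (hψ_pos : ∀ t ∈ Icc a b, 0 < ψ t) (hψ'_nonneg : ∀ t ∈ Icc a b, 0 ≤ ψ' t) :
    -(2 / ψ a) ≤ ∫ t in a..b, cos (φ t) := by
  -- `(sin φ + 1) / ψ` is nonnegative, at most `2 / ψ`, and grows no faster than `cos φ` integrates.
  set g : ℝ → ℝ := fun t => (sin (φ t) + 1) / ψ t
  have hsin (t : ℝ) : 0 ≤ sin (φ t) + 1 := by linarith [neg_one_le_sin (φ t)]
  have hg (t : ℝ) (ht : t ∈ Icc a b) : HasDerivAt g
      ((cos (φ t) * ψ t * ψ t - (sin (φ t) + 1) * ψ' t) / ψ t ^ 2) t :=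
    ((hφ t ht).sin.add_const 1).div (hψ t ht) (hψ_pos t ht).ne'
  have hg_deriv_le (t : ℝ) (ht : t ∈ Icc a b) :
      (cos (φ t) * ψ t * ψ t - (sin (φ t) + 1) * ψ' t) / ψ t ^ 2 ≤ cos (φ t) := by
    rw [div_le_iff₀ (pow_pos (hψ_pos t ht) 2)]
    linarith [mul_nonneg (hsin t) (hψ'_nonneg t ht)]
  have hcos : ContinuousOn (fun t => cos (φ t)) (Icc a b) :=
    fun t ht => (hφ t ht).cos.continuousAt.continuousWithinAt
  have hg_sub_le : g b - g a ≤ ∫ t in a..b, cos (φ t) :=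
    intervalIntegral.sub_le_integral_of_hasDeriv_right_of_le hab
      (fun t ht => (hg t ht).continuousAt.continuousWithinAt)
      (fun t ht => (hg t (Ioo_subset_Icc_self ht)).hasDerivWithinAt) hcos.integrableOn_Icc
      (fun t ht => hg_deriv_le t (Ioo_subset_Icc_self ht))
  have hgb : 0 ≤ g b := div_nonneg (hsin b) (hψ_pos b (right_mem_Icc.2 hab)).le
  have hga : g a ≤ 2 / ψ a := by
    have := hψ_pos a (left_mem_Icc.2 hab)
    simp only [g]
    gcongr
    linarith [sin_le_one (φ a)]
  linarith

lemma integral_cos_cubic_tail_ge {q θ b : ℝ} (hq : |q| ≤ 1 / 100) (hb : 3 / 5 ≤ b) :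
    -(3 / 10) ≤ ∫ t in (3 / 5)..b, cos (2 * π * (t ^ 3 + q * t + θ)) := by
  have hq_ge := (abs_le.1 hq).1
  have hφ (t : ℝ) : HasDerivAt (fun t => 2 * π * (t ^ 3 + q * t + θ))
      (2 * π * (3 * t ^ 2 + q)) t := by
    simpa using ((((hasDerivAt_id t).pow 3).add ((hasDerivAt_id t).const_mul q)).add_const
      θ).const_mul (2 * π)
  have hψ (t : ℝ) : HasDerivAt (fun t => 2 * π * (3 * t ^ 2 + q)) (2 * π * (3 * (2 * t))) t := by
    simpa using ((((hasDerivAt_id t).pow 2).const_mul 3).add_const q).const_mul (2 * π)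
  have hφ'_pos (t : ℝ) (ht : t ∈ Icc (3 / 5) b) : 0 < 2 * π * (3 * t ^ 2 + q) :=
    mul_pos two_pi_pos (by nlinarith [ht.1])
  have hψ'_nonneg (t : ℝ) (ht : t ∈ Icc (3 / 5) b) : 0 ≤ 2 * π * (3 * (2 * t)) :=
    mul_nonneg two_pi_pos.le (by linarith [ht.1])
  refine le_trans ?_ (neg_two_div_le_integral_cos hb (fun t _ => hφ t) (fun t _ => hψ t)
    hφ'_pos hψ'_nonneg)
  rw [neg_le_neg_iff, div_le_iff₀ (hφ'_pos _ (left_mem_Icc.2 hb))]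
  nlinarith [pi_gt_d2]

lemma integral_cos_cubic_center_ge {q θ : ℝ} (hq : |q| ≤ 1 / 100) (hθ : |θ| ≤ 1 / 100) :
    17 / 20 ≤ ∫ t in (-(3 / 5))..(3 / 5), cos (2 * π * (t ^ 3 + q * t + θ)) := by
  have hcos_ge (u : ℝ) : 1 - 20 * u ^ 2 ≤ cos (2 * π * u) := by
    have hπ : π ^ 2 ≤ 10 := by nlinarith [pi_lt_d2, pi_pos]
    nlinarith [one_sub_sq_div_two_le_cos (x := 2 * π * u), sq_nonneg u]
  have hphase_sq (t : ℝ) (ht : t ∈ Icc (-(3 / 5)) (3 / 5)) :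
      (t ^ 3 + q * t + θ) ^ 2 ≤ 2 * (t ^ 6 + (2 / 125) ^ 2) := by
    have hlin : |q * t + θ| ≤ 2 / 125 := by
      calc |q * t + θ| ≤ |q| * |t| + |θ| := by simpa only [abs_mul] using abs_add_le (q * t) θ
        _ ≤ 1 / 100 * (3 / 5) + 1 / 100 := by gcongr; exact abs_le.2 ht
        _ = 2 / 125 := by norm_num
    calc (t ^ 3 + q * t + θ) ^ 2 ≤ 2 * ((t ^ 3) ^ 2 + (q * t + θ) ^ 2) := by
          rw [add_assoc]; exact add_sq_le
      _ ≤ 2 * (t ^ 6 + (2 / 125) ^ 2) := by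
          rw [← pow_mul]; gcongr 2 * (_ + ?_); exact sq_le_sq' (abs_le.1 hlin).1 (abs_le.1 hlin).2
  calc (17 / 20 : ℝ) ≤ ∫ t in (-(3 / 5))..(3 / 5), (1 - 40 * (2 / 125) ^ 2 - 40 * t ^ 6) := by
        rw [intervalIntegral.integral_sub (by simp)
          (Continuous.intervalIntegrable (by fun_prop) _ _), intervalIntegral.integral_const_mul,
          integral_pow, intervalIntegral.integral_const, smul_eq_mul]
        norm_num
    _ ≤ _ := by
        refine intervalIntegral.integral_mono_on (by norm_num)
          (Continuous.intervalIntegrable (by fun_prop) _ _)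
          (Continuous.intervalIntegrable (by fun_prop) _ _) fun t ht => ?_
        linarith [hcos_ge (t ^ 3 + q * t + θ), hphase_sq t ht]

lemma integral_cos_cubic_ge {q θ A B : ℝ} (hq : |q| ≤ 1 / 100) (hθ : |θ| ≤ 1 / 100)
    (hA : 3 / 5 ≤ A) (hB : 3 / 5 ≤ B) :
    1 / 4 ≤ ∫ t in (-A)..B, cos (2 * π * (t ^ 3 + q * t + θ)) := by
  have hint (a b : ℝ) :
      IntervalIntegrable (fun t => cos (2 * π * (t ^ 3 + q * t + θ))) volume a b :=
    Continuous.intervalIntegrable (by fun_prop) _ _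
  have hreflect : ∫ t in (-A)..(-(3 / 5)), cos (2 * π * (t ^ 3 + q * t + θ)) =
      ∫ t in (3 / 5)..A, cos (2 * π * (t ^ 3 + q * t + -θ)) := by
    rw [← intervalIntegral.integral_comp_neg]
    refine intervalIntegral.integral_congr fun t _ => ?_
    rw [← cos_neg]
    ring_nf
  rw [← intervalIntegral.integral_add_adjacent_intervals (hint (-A) (-(3 / 5))) (hint _ B),
    ← intervalIntegral.integral_add_adjacent_intervals (hint (-(3 / 5)) (3 / 5)) (hint _ B),
    hreflect]
  linarith [integral_cos_cubic_tail_ge (θ := θ) hq hB, integral_cos_cubic_tail_ge (θ := -θ) hq hA,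
    integral_cos_cubic_center_ge hq hθ]

lemma integral_cos_cubic_rescaled_ge {t m q θ : ℝ} (ht : 4 ≤ t) (hm : m ∈ Icc (1 / 4 : ℝ) (3 / 4))
    (hq : |q| ≤ t / 100) (hθ : |θ| ≤ 1 / 100) :
    1 / (4 * t) ≤ ∫ η in (0 : ℝ)..1, cos (2 * π * (t ^ 3 * (η - m) ^ 3 + q * (η - m) + θ)) := by
  have ht0 : 0 < t := by linarith
  have hphase (η : ℝ) : t ^ 3 * (η - m) ^ 3 + q * (η - m) + θ =
      (t * η - t * m) ^ 3 + q / t * (t * η - t * m) + θ := by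
    field_simp
  simp only [hphase]
  rw [intervalIntegral.integral_comp_mul_sub
    (fun τ => cos (2 * π * (τ ^ 3 + q / t * τ + θ))) ht0.ne', mul_zero, zero_sub, smul_eq_mul]
  calc 1 / (4 * t) = t⁻¹ * (1 / 4) := by field_simp
    _ ≤ _ := by
        gcongr
        refine integral_cos_cubic_ge ?_ hθ (by nlinarith [hm.1]) (by nlinarith [hm.2])
        rw [abs_div, abs_of_pos ht0, div_le_iff₀ ht0]
        linarith

lemma integral_cos_sub_le_norm_integral_exp {α : Type*} [MeasurableSpace α] {μ : Measure α}
    {φ : α → ℝ} (hφ : Integrable (fun x => Complex.exp (φ x * Complex.I)) μ) (θ : ℝ) :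
    ∫ x, cos (φ x - θ) ∂μ ≤ ‖∫ x, Complex.exp (φ x * Complex.I) ∂μ‖ := by
  have hrot (x : α) : Complex.exp ((-θ : ℝ) * Complex.I) * Complex.exp (φ x * Complex.I) =
      Complex.exp ((φ x - θ : ℝ) * Complex.I) := by
    rw [← Complex.exp_add]
    push_cast
    ring_nf
  calc ∫ x, cos (φ x - θ) ∂μ
      = (∫ x, Complex.exp ((-θ : ℝ) * Complex.I) * Complex.exp (φ x * Complex.I) ∂μ).re := by
        refine Eq.trans ?_ (integral_re (𝕜 := ℂ) (hφ.const_mul _))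
        simp only [hrot, RCLike.re_to_complex, Complex.exp_ofReal_mul_I_re]
    _ ≤ ‖∫ x, Complex.exp ((-θ : ℝ) * Complex.I) * Complex.exp (φ x * Complex.I) ∂μ‖ :=
        Complex.re_le_norm _
    _ = ‖∫ x, Complex.exp (φ x * Complex.I) ∂μ‖ := by
        rw [integral_const_mul, norm_mul, Complex.norm_exp_ofReal_mul_I, one_mul]

lemma setIntegral_Icc_fin_two {E : Type*} [NormedAddCommGroup E] [NormedSpace ℝ E]
    {f : (Fin 2 → ℝ) → E} {a b : Fin 2 → ℝ} (hf : IntegrableOn f (Icc a b)) :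
    ∫ ξ in Icc a b, f ξ = ∫ y in Icc (a 1) (b 1), ∫ x in Icc (a 0) (b 0), f ![x, y] := by
  have hpre : MeasurableEquiv.finTwoArrow.symm ⁻¹' Icc a b =
      Icc (a 0) (b 0) ×ˢ Icc (a 1) (b 1) := by
    ext p
    simp [Pi.le_def, Prod.le_def, Fin.forall_fin_two, MeasurableEquiv.finTwoArrow,
      and_and_and_comm]
  have hmp := (volume_preserving_finTwoArrow ℝ).symm
  have hemb := (MeasurableEquiv.finTwoArrow (α := ℝ)).symm.measurableEmbedding
  rw [← hmp.integrableOn_comp_preimage hemb, hpre, Measure.volume_eq_prod, IntegrableOn,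
    ← Measure.prod_restrict] at hf
  rw [← hmp.setIntegral_preimage_emb hemb, hpre, Measure.volume_eq_prod, ← Measure.prod_restrict]
  exact integral_prod_symm _ hf

/-- Along the strip of width `1 / t` around the curve `ξ₁ = m (ξ₂)` the phase is nearly constant,
which yields the main term; off the strip it oscillates. -/
lemma norm_integral_exp_strip_ge {t k : ℝ} {m q r : ℝ → ℝ}
    (ht : 4 ≤ t) (hm_cont : Continuous m) (hq_cont : Continuous q) (hr_cont : Continuous r)
    (hm : ∀ y ∈ Icc (0 : ℝ) 1, m y ∈ Icc (1 / 4 : ℝ) (3 / 4))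
    (hq : ∀ y ∈ Icc (0 : ℝ) 1, |q y| ≤ t / 100) (hr : ∀ y ∈ Icc (0 : ℝ) 1, |r y| ≤ 1 / 100) :
    1 / (4 * t) ≤ ‖∫ ξ in Icc (0 : Fin 2 → ℝ) 1, Complex.exp (2 * π * Complex.I *
      (t ^ 3 * (ξ 0 - m (ξ 1)) ^ 3 + q (ξ 1) * (ξ 0 - m (ξ 1)) + r (ξ 1) + k : ℝ))‖ := by
  set P : (Fin 2 → ℝ) → ℝ := fun ξ =>
    t ^ 3 * (ξ 0 - m (ξ 1)) ^ 3 + q (ξ 1) * (ξ 0 - m (ξ 1)) + r (ξ 1)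
  have hP : Continuous P := by fun_prop
  have hcos : Continuous fun ξ => cos (2 * π * P ξ) := by fun_prop
  have hexp (ξ : Fin 2 → ℝ) : Complex.exp (2 * π * Complex.I * (P ξ + k : ℝ)) =
      Complex.exp ((2 * π * (P ξ + k) : ℝ) * Complex.I) := by
    push_cast
    ring_nf
  have hslice (y : ℝ) (hy : y ∈ Icc (0 : ℝ) 1) :
      1 / (4 * t) ≤ ∫ x in Icc (0 : ℝ) 1, cos (2 * π * P ![x, y]) := by
    rw [integral_Icc_eq_integral_Ioc, ← intervalIntegral.integral_of_le zero_le_one]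
    simpa only [P, Matrix.cons_val_zero, Matrix.cons_val_one] using
      integral_cos_cubic_rescaled_ge ht (hm y hy) (hq y hy) (hr y hy)
  have hslice_cont : Continuous fun y => ∫ x in Icc (0 : ℝ) 1, cos (2 * π * P ![x, y]) := by
    refine continuous_parametric_integral_of_continuous ?_ isCompact_Icc
    simp only [Function.uncurry_def]
    fun_prop
  calc 1 / (4 * t) = ∫ _y in Icc (0 : ℝ) 1, 1 / (4 * t) := by simp
    _ ≤ ∫ y in Icc (0 : ℝ) 1, ∫ x in Icc (0 : ℝ) 1, cos (2 * π * P ![x, y]) :=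
        setIntegral_mono_on continuous_const.integrableOn_Icc hslice_cont.integrableOn_Icc
          measurableSet_Icc hslice
    _ = ∫ ξ in Icc (0 : Fin 2 → ℝ) 1, cos (2 * π * (P ξ + k) - 2 * π * k) := by
        simp only [mul_add, add_sub_cancel_right]
        exact (setIntegral_Icc_fin_two (a := 0) (b := 1) hcos.integrableOn_Icc).symm
    _ ≤ ‖∫ ξ in Icc (0 : Fin 2 → ℝ) 1, Complex.exp ((2 * π * (P ξ + k) : ℝ) * Complex.I)‖ :=
        integral_cos_sub_le_norm_integral_exp (Continuous.integrableOn_Icc (by fun_prop)) _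
    _ = _ := by simp only [← hexp, P]

/-! ### Coordinates on the space of cubic coefficients -/

lemma continuous_Eone (k : ℕ) : Continuous (Eone k) := by
  refine continuous_parametric_integral_of_continuous
    (f := fun x ξ => Complex.exp (2 * Real.pi * Complex.I * (Pphase k x ξ))) ?_ isCompact_Icc
  unfold Pphase Function.uncurry
  fun_prop

/-- The exponents `(β₁, β₂)` of cubic monomials without the constant one, grouped by decreasing
`β₁`, and ordered by increasing `β₂` within each group. -/
def cubicExponent : Unit ⊕ Fin 2 ⊕ Fin 3 ⊕ Fin 3 → Fin 4 × Fin 4 :=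
  Sum.elim (fun _ => (3, 0)) <|
    Sum.elim ![(2, 0), (2, 1)] <| Sum.elim ![(1, 0), (1, 1), (1, 2)] ![(0, 1), (0, 2), (0, 3)]

lemma cubicExponent_injective : Function.Injective cubicExponent := by
  decide

/-- The enumeration of `Idx 3` by `cubicExponent`. -/
def cubicIdxEquiv : Unit ⊕ Fin 2 ⊕ Fin 3 ⊕ Fin 3 ≃ Idx 3 :=
  Equiv.ofBijective (fun j => (⟨cubicExponent j, by revert j; decide⟩ : Idx 3))
    ((Fintype.bijective_iff_injective_and_card _).2
      ⟨fun _ _ h => cubicExponent_injective (congrArg Subtype.val h), by decide⟩)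

lemma coe_cubicIdxEquiv (j : Unit ⊕ Fin 2 ⊕ Fin 3 ⊕ Fin 3) :
    (cubicIdxEquiv j).1 = cubicExponent j :=
  rfl

/-- The coefficient vector of a bivariate cubic without constant term, assembled from its
coefficients at `ξ₁³`, at `ξ₁², ξ₁²ξ₂`, at `ξ₁, ξ₁ξ₂, ξ₁ξ₂²` and at `ξ₂, ξ₂², ξ₂³`. -/
def cubicCoeff (p : ℝ × (Fin 2 → ℝ) × (Fin 3 → ℝ) × (Fin 3 → ℝ)) : EuclideanSpace ℝ (Idx 3) :=
  WithLp.toLp 2 fun β =>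
    Sum.elim (fun _ => p.1) (Sum.elim p.2.1 (Sum.elim p.2.2.1 p.2.2.2)) (cubicIdxEquiv.symm β)

lemma Pphase_cubicCoeff (a : ℝ) (z : Fin 2 → ℝ) (y w : Fin 3 → ℝ) (ξ : Fin 2 → ℝ) :
    Pphase 3 (cubicCoeff (a, z, y, w)) ξ =
      a * ξ 0 ^ 3 + (z 0 + z 1 * ξ 1) * ξ 0 ^ 2 + (y 0 + y 1 * ξ 1 + y 2 * ξ 1 ^ 2) * ξ 0 +
        (w 0 * ξ 1 + w 1 * ξ 1 ^ 2 + w 2 * ξ 1 ^ 3) := by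
  rw [Pphase, ← cubicIdxEquiv.sum_comp]
  simp [cubicCoeff, coe_cubicIdxEquiv, cubicExponent, Fintype.sum_sum_type, Fin.sum_univ_two,
    Fin.sum_univ_three]
  ring

lemma continuous_cubicCoeff : Continuous cubicCoeff := by
  refine (PiLp.continuous_toLp 2 _).comp (continuous_pi fun β => ?_)
  rcases cubicIdxEquiv.symm β with i | i | i | i <;> simp only [Sum.elim_inl, Sum.elim_inr] <;>
    fun_prop

lemma cubicCoeff_smul (r : ℝ) (p : ℝ × (Fin 2 → ℝ) × (Fin 3 → ℝ) × (Fin 3 → ℝ)) :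
    cubicCoeff (r • p) = r • cubicCoeff p := by
  ext β
  simp only [cubicCoeff, PiLp.smul_apply]
  rcases cubicIdxEquiv.symm β with i | i | i | i <;> rfl

lemma measurePreserving_cubicCoeff : MeasurePreserving cubicCoeff :=
  (PiLp.volume_preserving_toLp (Idx 3)).comp <|
    (volume_preserving_arrowCongr' cubicIdxEquiv (.refl ℝ) (.id volume)).comp <|
    (volume_measurePreserving_sumPiEquivProdPi_symm fun _ => ℝ).comp <|
    (volume_preserving_funUnique Unit ℝ).symm.prod <|
    (volume_measurePreserving_sumPiEquivProdPi_symm fun _ => ℝ).comp <|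
    (MeasurePreserving.id volume).prod <|
    (volume_measurePreserving_sumPiEquivProdPi_symm fun _ => ℝ)

lemma measurePreserving_prodMk_add_add {α β G H : Type*} [MeasurableSpace α] [MeasurableSpace β]
    [MeasurableSpace G] [AddGroup G] [MeasurableAdd₂ G]
    [MeasurableSpace H] [AddGroup H] [MeasurableAdd₂ H]
    {μ : Measure α} {μ' : Measure β} {ν : Measure G} {ρ : Measure H} [SFinite μ] [SFinite ν]
    [SFinite ρ] [ν.IsAddLeftInvariant] [ρ.IsAddLeftInvariant]
    {φ : α → β} (hφ : MeasurePreserving φ μ μ') {f : α → G} (hf : Measurable f) {g : α → G → H}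
    (hg : Measurable (Function.uncurry g)) :
    MeasurePreserving (fun p : α × G × H => (φ p.1, f p.1 + p.2.1, g p.1 p.2.1 + p.2.2))
      (μ.prod (ν.prod ρ)) (μ'.prod (ν.prod ρ)) := by
  have hg_slice (x : α) : MeasurePreserving (fun q : G × H => (f x + q.1, g x q.1 + q.2))
      (ν.prod ρ) (ν.prod ρ) := by
    refine (measurePreserving_add_left ν (f x)).skew_product (g := fun u v => g x u + v) ?_ <|
      ae_of_all _ fun u => map_add_left_eq_self ρ (g x u)
    exact (hg.comp (measurable_const.prodMk measurable_fst)).add measurable_snd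
  refine hφ.skew_product (g := fun x (q : G × H) => (f x + q.1, g x q.1 + q.2)) ?_ <|
    ae_of_all _ fun x => (hg_slice x).map_eq
  exact ((hf.comp measurable_fst).add measurable_snd.fst).prodMk
    ((hg.comp (measurable_fst.prodMk measurable_snd.fst)).add measurable_snd.snd)

lemma measurePreserving_const_smul {E : Type*} [NormedAddCommGroup E] [NormedSpace ℝ E]
    [MeasurableSpace E] [BorelSpace E] [FiniteDimensional ℝ E] (μ : Measure E) [μ.IsAddHaarMeasure]
    {r : ℝ} (hr : r ≠ 0) :
    MeasurePreserving (fun x : E => r • x) μ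
      (ENNReal.ofReal |(r ^ Module.finrank ℝ E)⁻¹| • μ) :=
  ⟨measurable_const_smul r, Measure.map_addHaar_smul μ hr⟩

/-- The coefficients of `ξ₁, ξ₁ξ₂, ξ₁ξ₂²` in `a (ξ₁ - m₀ - m₁ ξ₂)³`. -/
def cubeLinearCoeff (a : ℝ) (m : Fin 2 → ℝ) : Fin 3 → ℝ :=
  ![3 * a * m 0 ^ 2, 6 * a * m 0 * m 1, 3 * a * m 1 ^ 2]

/-- The coefficients of `ξ₂, ξ₂², ξ₂³` in
`a (ξ₁ - m₀ - m₁ ξ₂)³ + (d₀ + d₁ ξ₂ + d₂ ξ₂²) (ξ₁ - m₀ - m₁ ξ₂)`. -/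
def cubePureCoeff (a : ℝ) (m : Fin 2 → ℝ) (d : Fin 3 → ℝ) : Fin 3 → ℝ :=
  ![-(3 * a * m 0 ^ 2 * m 1 + d 0 * m 1 + d 1 * m 0),
    -(3 * a * m 0 * m 1 ^ 2 + d 1 * m 1 + d 2 * m 0), -(a * m 1 ^ 3 + d 2 * m 1)]

/-- The coefficients of the cubic
`a (ξ₁ - m₀ - m₁ ξ₂)³ + (d₀ + d₁ ξ₂ + d₂ ξ₂²) (ξ₁ - m₀ - m₁ ξ₂) + e₀ ξ₂ + e₁ ξ₂² + e₂ ξ₂³`,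
without its constant term, for the parameters `q = (m, d, e)`. -/
def stripCoeff (a : ℝ) (q : (Fin 2 → ℝ) × (Fin 3 → ℝ) × (Fin 3 → ℝ)) :
    EuclideanSpace ℝ (Idx 3) :=
  cubicCoeff (a, -(3 * a) • q.1, cubeLinearCoeff a q.1 + q.2.1,
    cubePureCoeff a q.1 q.2.1 + q.2.2)

lemma Pphase_stripCoeff (a : ℝ) (m : Fin 2 → ℝ) (d e : Fin 3 → ℝ) (ξ : Fin 2 → ℝ) :
    Pphase 3 (stripCoeff a (m, d, e)) ξ =
      a * (ξ 0 - (m 0 + m 1 * ξ 1)) ^ 3 +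
        (d 0 + d 1 * ξ 1 + d 2 * ξ 1 ^ 2) * (ξ 0 - (m 0 + m 1 * ξ 1)) +
        (e 0 * ξ 1 + e 1 * ξ 1 ^ 2 + e 2 * ξ 1 ^ 3) + (a * m 0 ^ 3 + d 0 * m 0) := by
  rw [stripCoeff, Pphase_cubicCoeff]
  simp [cubeLinearCoeff, cubePureCoeff]
  ring

lemma continuous_stripCoeff (a : ℝ) : Continuous (stripCoeff a) := by
  refine continuous_cubicCoeff.comp ?_
  unfold cubeLinearCoeff cubePureCoeff
  fun_prop

lemma stripCoeff_mul_smul (r a : ℝ) (m : Fin 2 → ℝ) (d e : Fin 3 → ℝ) :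
    stripCoeff (r * a) (m, r • d, r • e) = r • stripCoeff a (m, d, e) := by
  have hlin : cubeLinearCoeff (r * a) m = r • cubeLinearCoeff a m := by
    simp only [cubeLinearCoeff, Matrix.smul_cons, Matrix.smul_empty, smul_eq_mul]
    ring_nf
  have hpure : cubePureCoeff (r * a) m (r • d) = r • cubePureCoeff a m d := by
    simp only [cubePureCoeff, Matrix.smul_cons, Matrix.smul_empty, Pi.smul_apply, smul_eq_mul]
    ring_nf
  simp only [stripCoeff, hlin, hpure, ← smul_add, ← cubicCoeff_smul, Prod.smul_mk, smul_eq_mul]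
  rw [smul_smul, mul_neg, mul_left_comm]

lemma lintegral_stripCoeff {a : ℝ} (ha : a ≠ 0) {G : EuclideanSpace ℝ (Idx 3) → ℝ≥0∞}
    (hG : Measurable G) :
    ENNReal.ofReal ((3 * a) ^ 2) * ∫⁻ q, G (stripCoeff a q) = ∫⁻ p, G (cubicCoeff (a, p)) := by
  have hsq : 0 < (3 * a) ^ 2 := by positivity
  have hlin : Measurable (cubeLinearCoeff a) := by
    unfold cubeLinearCoeff
    fun_prop
  have hpure : Measurable (Function.uncurry (cubePureCoeff a)) := by
    unfold cubePureCoeff Function.uncurry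
    fun_prop
  have hmp := measurePreserving_prodMk_add_add
    (measurePreserving_const_smul volume (neg_ne_zero.2 (mul_ne_zero three_ne_zero ha)))
    (ν := volume) (ρ := volume) hlin hpure
  have hG' : Measurable fun p => G (cubicCoeff (a, p)) :=
    hG.comp (measurePreserving_cubicCoeff.measurable.comp measurable_prodMk_left)
  have hsubst := hmp.lintegral_comp hG'
  rw [Measure.prod_smul_left, lintegral_smul_measure, Module.finrank_fin_fun, neg_sq, abs_inv,
    abs_of_pos hsq, ENNReal.ofReal_inv_of_pos hsq] at hsubst
  exact (congrArg _ hsubst).trans <|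
    ENNReal.mul_inv_cancel_left (ENNReal.ofReal_pos.2 hsq).ne' ENNReal.ofReal_ne_top

lemma lintegral_eq_lintegral_stripCoeff {G : EuclideanSpace ℝ (Idx 3) → ℝ≥0∞}
    (hG : Measurable G) :
    ∫⁻ x, G x = ∫⁻ a, ENNReal.ofReal ((3 * a) ^ 2) * ∫⁻ q, G (stripCoeff a q) := by
  calc ∫⁻ x, G x = ∫⁻ p, G (cubicCoeff p) := (measurePreserving_cubicCoeff.lintegral_comp hG).symm
    _ = ∫⁻ a, ∫⁻ p, G (cubicCoeff (a, p)) :=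
        lintegral_prod _ (hG.comp measurePreserving_cubicCoeff.measurable).aemeasurable
    _ = _ := lintegral_congr_ae <| (Measure.ae_ne volume 0).mono fun a ha =>
        (lintegral_stripCoeff ha hG).symm

/-! ### Lower bounds on slices -/

/-- The parameters `(m, d, e)` for which the phase with coefficients `stripCoeff (t ^ 3) (m, d, e)`
is nearly constant on a strip of width `1 / t` inside the unit square; the balls are taken in the
sup norm. -/
def stripParam (t : ℝ) : Set ((Fin 2 → ℝ) × (Fin 3 → ℝ) × (Fin 3 → ℝ)) :=
  Metric.closedBall ![3 / 8, 1 / 8] (1 / 8) ×ˢ Metric.closedBall 0 (t / 300) ×ˢ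
    Metric.closedBall 0 (1 / 300)

lemma isCompact_stripParam (t : ℝ) : IsCompact (stripParam t) :=
  (isCompact_closedBall _ _).prod ((isCompact_closedBall _ _).prod (isCompact_closedBall _ _))

lemma volume_stripParam {t : ℝ} (ht : 0 ≤ t) :
    volume (stripParam t) = ENNReal.ofReal ((1 / 4) ^ 2 * (t / 150) ^ 3 * (1 / 150) ^ 3) := by
  rw [stripParam, Measure.volume_eq_prod, Measure.prod_prod, Measure.volume_eq_prod,
    Measure.prod_prod, Real.volume_pi_closedBall _ (by norm_num),
    Real.volume_pi_closedBall _ (by positivity), Real.volume_pi_closedBall _ (by norm_num),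
    ← ENNReal.ofReal_mul (by positivity), ← ENNReal.ofReal_mul (by positivity)]
  simp only [Fintype.card_fin]
  ring_nf

lemma abs_sum_mul_pow_le {ι : Type*} [Fintype ι] (u : ι → ℝ) {y : ℝ} (hy : y ∈ Icc (0 : ℝ) 1)
    (n : ι → ℕ) : |∑ i, u i * y ^ n i| ≤ Fintype.card ι * ‖u‖ := by
  calc |∑ i, u i * y ^ n i| ≤ ∑ i, |u i * y ^ n i| := Finset.abs_sum_le_sum_abs _ _
    _ ≤ ∑ _i : ι, ‖u‖ := Finset.sum_le_sum fun i _ => by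
        rw [abs_mul, abs_of_nonneg (pow_nonneg hy.1 _)]
        exact (mul_le_of_le_one_right (abs_nonneg _) (pow_le_one₀ hy.1 hy.2)).trans
          (norm_le_pi_norm u i)
    _ = Fintype.card ι * ‖u‖ := by simp

lemma norm_Eone_stripCoeff_ge {t : ℝ} (ht : 4 ≤ t) {q : (Fin 2 → ℝ) × (Fin 3 → ℝ) × (Fin 3 → ℝ)}
    (hq : q ∈ stripParam t) : 1 / (4 * t) ≤ ‖Eone 3 (stripCoeff (t ^ 3) q)‖ := by
  obtain ⟨m, d, e⟩ := q
  obtain ⟨hm, hd, he⟩ := hq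
  simp only [mem_closedBall_zero_iff] at hd he
  rw [mem_closedBall_iff_norm, pi_norm_le_iff_of_nonneg (by norm_num)] at hm
  have hm0 := abs_le.1 (hm 0)
  have hm1 := abs_le.1 (hm 1)
  simp only [Pi.sub_apply, Matrix.cons_val_zero, Matrix.cons_val_one] at hm0 hm1
  simp only [Eone, Pphase_stripCoeff]
  refine norm_integral_exp_strip_ge (m := fun y => m 0 + m 1 * y)
    (q := fun y => d 0 + d 1 * y + d 2 * y ^ 2)
    (r := fun y => e 0 * y + e 1 * y ^ 2 + e 2 * y ^ 3) ht (by fun_prop) (by fun_prop)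
    (by fun_prop) (fun y hy => ?_) (fun y hy => ?_) (fun y hy => ?_)
  · constructor <;> nlinarith [hy.1, hy.2]
  · have hsum : |d 0 + d 1 * y + d 2 * y ^ 2| ≤ 3 * ‖d‖ := by
      simpa [Fin.sum_univ_three] using abs_sum_mul_pow_le d hy ![0, 1, 2]
    linarith
  · have hsum : |e 0 * y + e 1 * y ^ 2 + e 2 * y ^ 3| ≤ 3 * ‖e‖ := by
      simpa [Fin.sum_univ_three] using abs_sum_mul_pow_le e hy ![1, 2, 3]
    linarith

lemma exists_norm_stripCoeff_le :
    ∃ K ≥ 1, ∀ t ≥ 1, ∀ q ∈ stripParam t, ‖stripCoeff (t ^ 3) q‖ ≤ K * t ^ 3 := by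
  obtain ⟨K, hK⟩ := (isCompact_stripParam 1).exists_bound_of_continuousOn
    (continuous_stripCoeff 1).continuousOn
  refine ⟨max 1 K, le_max_left _ _, fun t ht ⟨m, d, e⟩ ⟨hm, hd, he⟩ => ?_⟩
  have ht3 : 1 ≤ t ^ 3 := one_le_pow₀ ht
  have ht3_pos : 0 < t ^ 3 := by positivity
  have hmem : (m, (t ^ 3)⁻¹ • d, (t ^ 3)⁻¹ • e) ∈ stripParam 1 := by
    simp only [mem_closedBall_zero_iff] at hd he
    refine ⟨hm, ?_, ?_⟩ <;>
      simp only [mem_closedBall_zero_iff, norm_smul, norm_inv, norm_of_nonneg ht3_pos.le] <;>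
      rw [inv_mul_le_iff₀ ht3_pos]
    · have : t ≤ t ^ 3 := le_self_pow₀ ht three_ne_zero
      linarith
    · linarith
  have hscale : stripCoeff (t ^ 3) (m, d, e) =
      t ^ 3 • stripCoeff 1 (m, (t ^ 3)⁻¹ • d, (t ^ 3)⁻¹ • e) := by
    rw [← stripCoeff_mul_smul, mul_one, smul_inv_smul₀ ht3_pos.ne', smul_inv_smul₀ ht3_pos.ne']
  rw [hscale, norm_smul, norm_of_nonneg ht3_pos.le, mul_comm]
  gcongr
  exact (hK _ hmem).trans (le_max_right _ _)

lemma setLIntegral_ofReal_mul_inv {C a b : ℝ} (hC : 0 ≤ C) (ha : 0 < a) (hab : a ≤ b) :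
    ∫⁻ x in Icc a b, ENNReal.ofReal (C * x⁻¹) = ENNReal.ofReal (C * log (b / a)) := by
  have hpos (x : ℝ) (hx : x ∈ Icc a b) : 0 < x := ha.trans_le hx.1
  have hcont : ContinuousOn (fun x : ℝ => C * x⁻¹) (Icc a b) :=
    continuousOn_const.mul (continuousOn_inv₀.mono fun x hx => (hpos x hx).ne')
  rw [← ofReal_integral_eq_lintegral_ofReal hcont.integrableOn_Icc <|
    (ae_restrict_mem measurableSet_Icc).mono fun x hx =>
      mul_nonneg hC (inv_nonneg.2 (hpos x hx).le),
    integral_Icc_eq_integral_Ioc, ← intervalIntegral.integral_of_le hab,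
    intervalIntegral.integral_const_mul, integral_inv_of_pos ha (ha.trans_le hab)]

/-- The constant in the lower bound of a slice at fixed coefficient of `ξ₁³`: the Jacobian
contributes `9`, the lower bound for `‖Eone‖ ^ 12` contributes `(1 / 4) ^ 12`, and the volume of
`stripParam` the rest. -/
def sliceConst : ℝ := 9 * (1 / 4) ^ 12 * ((1 / 4) ^ 2 * (1 / 150) ^ 6)

lemma sliceConst_pos : 0 < sliceConst := by
  unfold sliceConst
  positivity

lemma ofReal_sliceConst_mul_inv_le {t : ℝ} (ht : 4 ≤ t) {s : Set (EuclideanSpace ℝ (Idx 3))}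
    (hs : ∀ q ∈ stripParam t, stripCoeff (t ^ 3) q ∈ s) :
    ENNReal.ofReal (sliceConst * (t ^ 3)⁻¹) ≤ ENNReal.ofReal ((3 * t ^ 3) ^ 2) *
      ∫⁻ q, s.indicator (fun x => ENNReal.ofReal (‖Eone 3 x‖ ^ 12)) (stripCoeff (t ^ 3) q) := by
  have ht0 : 0 < t := by linarith
  calc ENNReal.ofReal (sliceConst * (t ^ 3)⁻¹)
      = ENNReal.ofReal ((3 * t ^ 3) ^ 2) *
          (ENNReal.ofReal ((1 / (4 * t)) ^ 12) * volume (stripParam t)) := by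
        rw [volume_stripParam ht0.le, ← ENNReal.ofReal_mul (by positivity),
          ← ENNReal.ofReal_mul (by positivity), sliceConst]
        congr 1
        field_simp
        norm_num
    _ = ENNReal.ofReal ((3 * t ^ 3) ^ 2) *
          ∫⁻ _q in stripParam t, ENNReal.ofReal ((1 / (4 * t)) ^ 12) := by
        rw [setLIntegral_const]
    _ ≤ ENNReal.ofReal ((3 * t ^ 3) ^ 2) * ∫⁻ q in stripParam t,
          s.indicator (fun x => ENNReal.ofReal (‖Eone 3 x‖ ^ 12)) (stripCoeff (t ^ 3) q) := by
        gcongr _ * ?_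
        refine setLIntegral_mono' (isCompact_stripParam t).measurableSet fun q hq => ?_
        rw [indicator_of_mem (hs q hq)]
        gcongr
        exact norm_Eone_stripCoeff_ge ht hq
    _ ≤ _ := by
        gcongr
        exact Measure.restrict_le_self

lemma ofReal_sliceConst_mul_log_le {K R : ℝ} (hK : 1 ≤ K)
    (hbound : ∀ t ≥ 1, ∀ q ∈ stripParam t, ‖stripCoeff (t ^ 3) q‖ ≤ K * t ^ 3) (hR : 64 * K ≤ R) :
    ENNReal.ofReal (sliceConst * log (R / (64 * K))) ≤
      ∫⁻ x in Metric.closedBall (0 : EuclideanSpace ℝ (Idx 3)) R,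
        ENNReal.ofReal (‖Eone 3 x‖ ^ 12) := by
  have hK0 : 0 < K := by linarith
  set F : EuclideanSpace ℝ (Idx 3) → ℝ≥0∞ :=
    (Metric.closedBall 0 R).indicator fun x => ENNReal.ofReal (‖Eone 3 x‖ ^ 12)
  have hF : Measurable F := by
    have hE := continuous_Eone 3
    exact Measurable.indicator (by fun_prop) Metric.isClosed_closedBall.measurableSet
  have hslice (a : ℝ) (ha : a ∈ Icc 64 (R / K)) : ENNReal.ofReal (sliceConst * a⁻¹) ≤
      ENNReal.ofReal ((3 * a) ^ 2) * ∫⁻ q, F (stripCoeff a q) := by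
    have ha0 : 0 ≤ a := by linarith [ha.1]
    obtain ⟨t, ht0, rfl⟩ : ∃ t ≥ 0, t ^ 3 = a :=
      ⟨a ^ ((3 : ℕ) : ℝ)⁻¹, by positivity, rpow_inv_natCast_pow ha0 three_ne_zero⟩
    have ht : 4 ≤ t := le_of_pow_le_pow_left₀ three_ne_zero ht0 (by linarith [ha.1])
    refine ofReal_sliceConst_mul_inv_le ht fun q hq => mem_closedBall_zero_iff.2 ?_
    calc ‖stripCoeff (t ^ 3) q‖ ≤ K * t ^ 3 := hbound t (by linarith) q hq
      _ ≤ R := (le_div_iff₀' hK0).1 ha.2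
  calc ENNReal.ofReal (sliceConst * log (R / (64 * K)))
      = ∫⁻ a in Icc 64 (R / K), ENNReal.ofReal (sliceConst * a⁻¹) := by
        rw [setLIntegral_ofReal_mul_inv sliceConst_pos.le (by norm_num) ((le_div_iff₀ hK0).2 hR),
          div_div, mul_comm K]
    _ ≤ ∫⁻ a in Icc 64 (R / K),
          ENNReal.ofReal ((3 * a) ^ 2) * ∫⁻ q, F (stripCoeff a q) :=
        setLIntegral_mono' measurableSet_Icc hslice
    _ ≤ ∫⁻ a, ENNReal.ofReal ((3 * a) ^ 2) * ∫⁻ q, F (stripCoeff a q) :=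
        setLIntegral_le_lintegral _ _
    _ = ∫⁻ x, F x := (lintegral_eq_lintegral_stripCoeff hF).symm
    _ = _ := lintegral_indicator Metric.isClosed_closedBall.measurableSet _

lemma exists_sliceConst_mul_log_le_integral :
    ∃ K ≥ 1, ∀ R ≥ 64 * K, sliceConst * log (R / (64 * K)) ≤
      ∫ x in Metric.closedBall (0 : EuclideanSpace ℝ (Idx 3)) R, ‖Eone 3 x‖ ^ 12 := by
  obtain ⟨K, hK, hbound⟩ := exists_norm_stripCoeff_le
  refine ⟨K, hK, fun R hR => ?_⟩
  have hcont : Continuous fun x : EuclideanSpace ℝ (Idx 3) => ‖Eone 3 x‖ ^ 12 := by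
    have hE := continuous_Eone 3
    fun_prop
  rw [← ENNReal.ofReal_le_ofReal_iff (integral_nonneg fun _ => by positivity),
    ofReal_integral_eq_lintegral_ofReal
      (hcont.continuousOn.integrableOn_compact (isCompact_closedBall _ _))
      (ae_of_all _ fun _ => by positivity)]
  exact ofReal_sliceConst_mul_log_le hK hbound hR

/-- **Remark 1.5** (case `k = 3`, `N = 9`): `E_31` just misses `L^{12}(ℝ⁹)`:
there are `c > 0` and `R₀ ≥ 2` with `∫_{B_R} |E_31(x)|^{12} dx ≥ c log R` for all
`R ≥ R₀`, where `B_R` is the closed Euclidean ball of radius `R` about the origin. -/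
theorem E31_log_lower_bound :
    ∃ c : ℝ, 0 < c ∧ ∃ R₀ : ℝ, 2 ≤ R₀ ∧
      ∀ R : ℝ, R₀ ≤ R →
        c * Real.log R ≤
          ∫ x in Metric.closedBall (0 : EuclideanSpace ℝ (Idx 3)) R,
            ‖Eone 3 (fun β => x β)‖ ^ (12 : ℕ) := by
  obtain ⟨K, hK, hlog_le⟩ := exists_sliceConst_mul_log_le_integral
  refine ⟨sliceConst / 2, half_pos sliceConst_pos, (64 * K) ^ 2, by nlinarith, fun R hR => ?_⟩
  have hK0 : 0 < 64 * K := by linarith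
  have hR0 : 0 < R := (pow_pos hK0 2).trans_le hR
  have hlog : log R ≤ 2 * log (R / (64 * K)) := by
    have hsq : 2 * log (64 * K) ≤ log R := by
      simpa only [log_pow, Nat.cast_ofNat] using log_le_log (pow_pos hK0 2) hR
    rw [log_div hR0.ne' hK0.ne']
    linarith
  calc sliceConst / 2 * log R ≤ sliceConst / 2 * (2 * log (R / (64 * K))) :=
        mul_le_mul_of_nonneg_left hlog (half_pos sliceConst_pos).le
    _ = sliceConst * log (R / (64 * K)) := by ring
    _ ≤ _ := hlog_le R (by nlinarith)
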